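/- Let ρ_RQE be a state on H_R⊗H_Q⊗H_E (all finite-dimensional) with I(R;E|Q)_ρ = 0. Then for all finite-dimensional Hilbert spaces H_{Q'}, H_{E'} and every isometry V : H_Q⊗H_E → H_{Q'}⊗H_{E'}, there exists a CPTP map 𝓔 : L(H_Q) → L(H_{Q'}) such that Tr_{E'}[(1_R⊗V) ρ_RQE (1_R⊗V)†] = (id_R⊗𝓔)(ρ_RQ). -/

import Mathlib

open Matrix Kronecker ComplexOrder

noncomputable section

/-- Von Neumann entropy `S(ρ) = -Tr[ρ log ρ]`, computed from the eigenvalues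
(junk value `0` if `ρ` is not Hermitian). -/
def vnEntropy {n : Type*} [Fintype n] [DecidableEq n] (ρ : Matrix n n ℂ) : ℝ :=
  if h : ρ.IsHermitian then ∑ i, Real.negMulLog (h.eigenvalues i) else 0

/-- Partial trace over the first tensor factor. -/
def ptraceLeft {A B : Type*} [Fintype A] (M : Matrix (A × B) (A × B) ℂ) : Matrix B B ℂ :=
  Matrix.of fun x y => ∑ a, M (a, x) (a, y)

/-- Partial trace over the second tensor factor. -/
def ptraceRight {A B : Type*} [Fintype B] (M : Matrix (A × B) (A × B) ℂ) : Matrix A A ℂ :=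
  Matrix.of fun x y => ∑ b, M (x, b) (y, b)

/-- Partial trace over the last factor of a tripartite operator on `R ⊗ Q ⊗ E`. -/
def ptrace3E {R Q E : Type*} [Fintype E] (M : Matrix (R × Q × E) (R × Q × E) ℂ) :
    Matrix (R × Q) (R × Q) ℂ :=
  Matrix.of fun x y => ∑ e, M (x.1, x.2, e) (y.1, y.2, e)

/-- A state is a positive semidefinite operator with unit trace. -/
def IsState {n : Type*} [Fintype n] (ρ : Matrix n n ℂ) : Prop :=
  ρ.PosSemidef ∧ ρ.trace = 1

/-- Quantum mutual information `I(A;B) = S(ρ_A) + S(ρ_B) - S(ρ_AB)`. -/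
def mutualInfo {A B : Type*} [Fintype A] [DecidableEq A] [Fintype B] [DecidableEq B]
    (ρ : Matrix (A × B) (A × B) ℂ) : ℝ :=
  vnEntropy (ptraceRight ρ) + vnEntropy (ptraceLeft ρ) - vnEntropy ρ

/-- Conditional quantum mutual information
`I(R;E|Q) = S(ρ_RQ) + S(ρ_QE) - S(ρ_RQE) - S(ρ_Q)`. -/
def condMutualInfo {R Q E : Type*} [Fintype R] [DecidableEq R] [Fintype Q] [DecidableEq Q]
    [Fintype E] [DecidableEq E] (ρ : Matrix (R × Q × E) (R × Q × E) ℂ) : ℝ :=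
  vnEntropy (ptrace3E ρ) + vnEntropy (ptraceLeft ρ) - vnEntropy ρ
    - vnEntropy (ptraceLeft (ptrace3E ρ))

/-- The map `id_n ⊗ Φ` obtained by applying `Φ` blockwise. -/
def idTensor {A B : Type*} (n : Type*) (Φ : Matrix A A ℂ →ₗ[ℂ] Matrix B B ℂ)
    (M : Matrix (n × A) (n × A) ℂ) : Matrix (n × B) (n × B) ℂ :=
  Matrix.of fun x y => Φ (Matrix.of fun a b => M (x.1, a) (y.1, b)) x.2 y.2

/-- Complete positivity: for every `k`, `id_{Fin k} ⊗ Φ` preserves positive semidefiniteness. -/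
def IsCPMap {A B : Type*} [Fintype A] [Fintype B]
    (Φ : Matrix A A ℂ →ₗ[ℂ] Matrix B B ℂ) : Prop :=
  ∀ (k : ℕ) (M : Matrix (Fin k × A) (Fin k × A) ℂ), M.PosSemidef →
    (idTensor (Fin k) Φ M).PosSemidef

/-- A CPTP map (quantum channel). -/
def IsCPTP {A B : Type*} [Fintype A] [Fintype B]
    (Φ : Matrix A A ℂ →ₗ[ℂ] Matrix B B ℂ) : Prop :=
  IsCPMap Φ ∧ ∀ M : Matrix A A ℂ, (Φ M).trace = M.trace

/-- The family of states on `Q ⊗ E` steered from `R` by measurements on a tripartite state. -/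
def steered {R Q E : Type*} [Fintype R] [Fintype Q] [DecidableEq Q] [Fintype E] [DecidableEq E]
    (ρ : Matrix (R × Q × E) (R × Q × E) ℂ) : Set (Matrix (Q × E) (Q × E) ℂ) :=
  { ω | ∃ P : Matrix R R ℂ, P.PosSemidef ∧
      (ptraceLeft ((P ⊗ₖ (1 : Matrix (Q × E) (Q × E) ℂ)) * ρ)).trace ≠ 0 ∧
      ω = ((ptraceLeft ((P ⊗ₖ (1 : Matrix (Q × E) (Q × E) ℂ)) * ρ)).trace)⁻¹ •
            ptraceLeft ((P ⊗ₖ (1 : Matrix (Q × E) (Q × E) ℂ)) * ρ) }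

/-- A post-selected family of bipartite system-environment states: the normalized
output state space of some completely positive map `𝒫 : Q₀E₀ → QE`. -/
def IsPostSelected {Q E : Type*} [Fintype Q] [Fintype E]
    (S : Set (Matrix (Q × E) (Q × E) ℂ)) : Prop :=
  ∃ (n0 m0 : ℕ)
    (P : Matrix (Fin n0 × Fin m0) (Fin n0 × Fin m0) ℂ →ₗ[ℂ] Matrix (Q × E) (Q × E) ℂ),
    IsCPMap P ∧
    S = { ω | ∃ ρ0, IsState ρ0 ∧ (P ρ0).trace ≠ 0 ∧ ω = ((P ρ0).trace)⁻¹ • P ρ0 }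

/-! ### Scalar identities -/

/-- The logarithmic potential `∑ w p (log (p + t s) - log s)`, which at `t = 0` is the relative
entropy of the weighted families `p` and `s`. -/
def logPotential {κ : Type*} [Fintype κ] (w p s : κ → ℝ) (t : ℝ) : ℝ :=
  ∑ k, w k * p k * (Real.log (p k + t * s k) - Real.log (s k))

/-- The resolvent sum `∑ w s² / (p + t s)`. -/
def resolventSum {κ : Type*} [Fintype κ] (w p s : κ → ℝ) (t : ℝ) : ℝ :=
  ∑ k, w k * (s k ^ 2 / (p k + t * s k))

section LogPotential

variable {κ : Type*} [Fintype κ] {w p s : κ → ℝ}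

lemma continuousOn_logPotential (hp : ∀ k, 0 ≤ p k) (hs : ∀ k, 0 ≤ s k) :
    ContinuousOn (logPotential w p s) (Set.Ici 0) := by
  unfold logPotential
  refine continuousOn_finsetSum _ fun k _ => ?_
  rcases (hp k).eq_or_lt with h | h
  · simp only [← h, mul_zero, zero_mul]
    exact continuousOn_const
  · refine continuousOn_const.mul (ContinuousOn.sub (ContinuousOn.log (by fun_prop) ?_)
      continuousOn_const)
    intro t ht
    have : 0 ≤ t * s k := mul_nonneg ht (hs k)
    positivity

lemma hasDerivAt_logPotential (hp : ∀ k, 0 ≤ p k) (hs : ∀ k, 0 ≤ s k) {t : ℝ} (ht : 0 < t) :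
    HasDerivAt (logPotential w p s) (∑ k, w k * s k - t * resolventSum w p s t) t := by
  have key : ∑ k, w k * s k - t * resolventSum w p s t
      = ∑ k, w k * p k * (s k / (p k + t * s k)) := by
    rw [resolventSum, Finset.mul_sum, ← Finset.sum_sub_distrib]
    refine Finset.sum_congr rfl fun k _ => ?_
    rcases (hs k).eq_or_lt with h | h
    · simp [← h]
    · have : p k + t * s k ≠ 0 := (add_pos_of_nonneg_of_pos (hp k) (mul_pos ht h)).ne'
      linear_combination -w k * div_mul_cancel₀ (s k) this
  rw [key]
  unfold logPotential
  refine HasDerivAt.fun_sum fun k _ => ?_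
  rcases (hp k).eq_or_lt with h | h
  · simpa [← h] using hasDerivAt_const t (0 : ℝ)
  · have hne : p k + t * s k ≠ 0 :=
      (add_pos_of_pos_of_nonneg h (mul_nonneg ht.le (hs k))).ne'
    have h1 : HasDerivAt (fun t => p k + t * s k) (s k) t := by
      simpa using ((hasDerivAt_id t).mul_const (s k)).const_add (p k)
    exact ((h1.log hne).sub_const _).const_mul _

lemma tendsto_logPotential (hp : ∀ k, 0 ≤ p k) (hs : ∀ k, 0 ≤ s k)
    (hsupp : ∀ k, s k = 0 → w k * p k = 0) :
    Filter.Tendsto (fun t => logPotential w p s t - (∑ k, w k * p k) * Real.log t)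
      Filter.atTop (nhds 0) := by
  have hterm : ∀ k, Filter.Tendsto
      (fun t => w k * p k * (Real.log (p k + t * s k) - Real.log (s k)) - w k * p k * Real.log t)
      Filter.atTop (nhds 0) := by
    intro k
    rcases (hs k).eq_or_lt with h | h
    · simp [hsupp k h.symm]
    · have h1 : Filter.Tendsto (fun t : ℝ => p k / s k * t⁻¹ + 1) Filter.atTop (nhds 1) := by
        simpa using (tendsto_inv_atTop_zero.const_mul (p k / s k)).add_const 1
      have h2 : Filter.Tendsto (fun t : ℝ => w k * p k * Real.log (p k / s k * t⁻¹ + 1))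
          Filter.atTop (nhds 0) := by
        simpa using (h1.log one_ne_zero).const_mul (w k * p k)
      refine h2.congr' ?_
      filter_upwards [Filter.eventually_gt_atTop 0] with t ht
      have h3 : p k + t * s k = (p k / s k * t⁻¹ + 1) * (s k * t) := by
        field_simp
      have h4 : p k / s k * t⁻¹ + 1 ≠ 0 := by
        have := hp k
        positivity
      rw [h3, Real.log_mul h4 (by positivity), Real.log_mul h.ne' ht.ne']
      ring
  have := tendsto_finsetSum Finset.univ fun k _ => hterm k
  simpa [logPotential, Finset.sum_sub_distrib, Finset.sum_mul] using this

/-- If two weighted families have the same masses and the same relative entropy, and their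
resolvent sums are ordered, then the resolvent sums coincide. -/
lemma resolventSum_eq_of_logPotential_eq {κ' : Type*} [Fintype κ'] {w' p' s' : κ' → ℝ}
    (hp : ∀ k, 0 ≤ p k) (hs : ∀ k, 0 ≤ s k) (hsupp : ∀ k, s k = 0 → w k * p k = 0)
    (hp' : ∀ k, 0 ≤ p' k) (hs' : ∀ k, 0 ≤ s' k) (hsupp' : ∀ k, s' k = 0 → w' k * p' k = 0)
    (hmassp : ∑ k, w k * p k = ∑ k, w' k * p' k) (hmasss : ∑ k, w k * s k = ∑ k, w' k * s' k)
    (hent : logPotential w p s 0 = logPotential w' p' s' 0)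
    (hle : ∀ t, 0 < t → resolventSum w' p' s' t ≤ resolventSum w p s t) {t : ℝ} (ht : 0 < t) :
    resolventSum w' p' s' t = resolventSum w p s t := by
  set G : ℝ → ℝ := fun t => logPotential w' p' s' t - logPotential w p s t with hG
  have hderiv : ∀ t, 0 < t →
      HasDerivAt G (t * (resolventSum w p s t - resolventSum w' p' s' t)) t := by
    intro t ht
    refine ((hasDerivAt_logPotential hp' hs' ht).sub
      (hasDerivAt_logPotential hp hs ht)).congr_deriv ?_
    rw [hmasss]
    ring
  have hmono : MonotoneOn G (Set.Ici 0) := by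
    refine monotoneOn_of_deriv_nonneg (convex_Ici 0)
      ((continuousOn_logPotential hp' hs').sub (continuousOn_logPotential hp hs)) ?_ ?_
    · intro x hx
      rw [interior_Ici] at hx
      exact (hderiv x hx).differentiableAt.differentiableWithinAt
    · intro x hx
      rw [interior_Ici] at hx
      rw [(hderiv x hx).deriv]
      exact mul_nonneg (le_of_lt hx) (sub_nonneg.2 (hle x hx))
  have hlim : Filter.Tendsto G Filter.atTop (nhds 0) := by
    have := (tendsto_logPotential hp' hs' hsupp').sub (tendsto_logPotential hp hs hsupp)
    simpa [hmassp, hG] using this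
  have hzero : ∀ x, 0 ≤ x → G x = 0 := by
    intro x hx
    refine le_antisymm ?_ ?_
    · refine ge_of_tendsto hlim ?_
      filter_upwards [Filter.eventually_ge_atTop x] with y hy
      exact hmono hx (hx.trans hy) hy
    · have := hmono (Set.mem_Ici.2 le_rfl) hx hx
      simpa [hG, hent] using this
  have h0 : HasDerivAt G 0 t := by
    refine (hasDerivAt_const t (0 : ℝ)).congr_of_eventuallyEq ?_
    filter_upwards [Ioi_mem_nhds ht] with x hx
    exact hzero x (le_of_lt hx)
  have := (hderiv t ht).unique h0
  rcases mul_eq_zero.1 this with h | h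
  · exact absurd h ht.ne'
  · linarith

end LogPotential

/-- A vanishing combination of the functions `t ↦ 1 / (x + t)` is annihilated by every function
of the poles: the simple fractions with distinct poles are linearly independent. -/
lemma sum_mul_apply_eq_zero_of_sum_div_eq_zero {κ : Type*} [Fintype κ] (α : κ → ℂ) (x : κ → ℝ)
    (hx : ∀ k, 0 ≤ x k) (h : ∀ t : ℝ, 0 < t → ∑ k, α k * ((x k + t : ℝ) : ℂ)⁻¹ = 0)
    (f : ℝ → ℂ) : ∑ k, α k * f (x k) = 0 := by
  classical
  set X : Finset ℝ := Finset.univ.image x with hX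
  set A : ℝ → ℂ := fun y => ∑ k with x k = y, α k with hA
  have hfib : ∀ g : ℝ → ℂ, ∑ k, α k * g (x k) = ∑ y ∈ X, A y * g y := by
    intro g
    rw [← Finset.sum_fiberwise_of_maps_to (s := Finset.univ) (t := X) (g := x)
      (fun k _ => Finset.mem_image_of_mem x (Finset.mem_univ k))]
    refine Finset.sum_congr rfl fun y _ => ?_
    rw [hA, Finset.sum_mul]
    refine Finset.sum_congr rfl fun k hk => ?_
    rw [(Finset.mem_filter.1 hk).2]
  set P : Polynomial ℂ := ∑ y ∈ X, Polynomial.C (A y) *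
    ∏ z ∈ X.erase y, (Polynomial.C (z : ℂ) + Polynomial.X) with hP
  have hroot : ∀ t : ℝ, 0 < t → P.IsRoot (t : ℂ) := by
    intro t ht
    have hne : ∀ y ∈ X, ((y + t : ℝ) : ℂ) ≠ 0 := by
      intro y hy
      obtain ⟨k, -, rfl⟩ := Finset.mem_image.1 hy
      exact Complex.ofReal_ne_zero.2 (add_pos_of_nonneg_of_pos (hx k) ht).ne'
    have h1 := h t ht
    rw [hfib fun y => ((y + t : ℝ) : ℂ)⁻¹] at h1
    have h2 : P.eval (t : ℂ)
        = (∏ z ∈ X, ((z + t : ℝ) : ℂ)) * ∑ y ∈ X, A y * ((y + t : ℝ) : ℂ)⁻¹ := by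
      rw [hP, Polynomial.eval_finsetSum, Finset.mul_sum]
      refine Finset.sum_congr rfl fun y hy => ?_
      rw [← Finset.mul_prod_erase X _ hy]
      simp only [Polynomial.eval_mul, Polynomial.eval_C, Polynomial.eval_prod,
        Polynomial.eval_add, Polynomial.eval_X, ← Complex.ofReal_add]
      linear_combination -(A y * ∏ z ∈ X.erase y, ((z + t : ℝ) : ℂ)) *
        mul_inv_cancel₀ (hne y hy)
    rw [Polynomial.IsRoot, h2, h1, mul_zero]
  have hP0 : P = 0 := by
    refine Polynomial.eq_zero_of_infinite_isRoot P ?_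
    refine Set.Infinite.mono (s := (fun t : ℝ => (t : ℂ)) '' Set.Ioi 0) ?_
      ((Set.Ioi_infinite 0).image Complex.ofReal_injective.injOn)
    rintro _ ⟨t, ht, rfl⟩
    exact hroot t ht
  have hA0 : ∀ y ∈ X, A y = 0 := by
    intro y hy
    have h1 : P.eval (-(y : ℂ)) = A y * ∏ z ∈ X.erase y, ((z : ℂ) - y) := by
      rw [hP, Polynomial.eval_finsetSum, Finset.sum_eq_single_of_mem y hy]
      · simp [Polynomial.eval_prod, sub_eq_add_neg]
      · intro z _ hzy
        rw [Polynomial.eval_mul, Polynomial.eval_prod,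
          Finset.prod_eq_zero (Finset.mem_erase.2 ⟨hzy.symm, hy⟩) (by simp), mul_zero]
    rw [hP0, Polynomial.eval_zero] at h1
    refine (mul_eq_zero.1 h1.symm).resolve_right (Finset.prod_ne_zero_iff.2 fun z hz => ?_)
    exact sub_ne_zero.2 fun h => (Finset.mem_erase.1 hz).1 (Complex.ofReal_injective h)
  rw [hfib f]
  exact Finset.sum_eq_zero fun y hy => by rw [hA0 y hy, zero_mul]

/-! ### The variational gap in coordinates -/

lemma sum_mul_normSq_sub_eq_resolventSum_sub {κ κ' : Type*} [Fintype κ] [Fintype κ']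
    {c y : κ → ℂ} {p s : κ → ℝ} {c' : κ' → ℂ} {p' s' : κ' → ℝ}
    (hp : ∀ k, 0 ≤ p k) (hs : ∀ k, 0 ≤ s k) (hp' : ∀ k, 0 ≤ p' k) (hs' : ∀ k, 0 ≤ s' k)
    {t : ℝ} (ht : 0 < t) {z : κ' → ℂ} (hz : ∀ k, z k = c' k * ((s' k / (p' k + t * s' k) : ℝ) : ℂ))
    (hpy : ∑ k, p k * Complex.normSq (y k) = ∑ k, p' k * Complex.normSq (z k))
    (hsy : ∑ k, s k * Complex.normSq (y k) = ∑ k, s' k * Complex.normSq (z k))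
    (hcy : ∑ k, (s k : ℂ) * (star (c k) * y k) = ∑ k, (s' k : ℂ) * (star (c' k) * z k)) :
    ∑ k, (p k + t * s k) * Complex.normSq (c k * ((s k / (p k + t * s k) : ℝ) : ℂ) - y k)
      = resolventSum (fun k => Complex.normSq (c k)) p s t
        - resolventSum (fun k => Complex.normSq (c' k)) p' s' t := by
  have hpt : ∀ k, (p k + t * s k) *
      Complex.normSq (c k * ((s k / (p k + t * s k) : ℝ) : ℂ) - y k)
      = Complex.normSq (c k) * (s k ^ 2 / (p k + t * s k))
        - 2 * ((s k : ℂ) * (star (c k) * y k)).re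
        + (p k * Complex.normSq (y k) + t * (s k * Complex.normSq (y k))) := by
    intro k
    rcases (hs k).eq_or_lt with h | h
    · simp [← h]
    · have hne : p k + t * s k ≠ 0 := (add_pos_of_nonneg_of_pos (hp k) (mul_pos ht h)).ne'
      have e := div_mul_cancel₀ (s k) hne
      have e2 : s k ^ 2 / (p k + t * s k)
          = (s k / (p k + t * s k)) ^ 2 * (p k + t * s k) := by field_simp
      rw [e2]
      generalize hq : s k / (p k + t * s k) = q at e ⊢
      simp [Complex.normSq_apply]
      linear_combination -2 * ((c k).re * (y k).re + (c k).im * (y k).im) * e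
  have hq1 : ∑ k, ((s' k : ℂ) * (star (c' k) * z k)).re
      = resolventSum (fun k => Complex.normSq (c' k)) p' s' t := by
    refine Finset.sum_congr rfl fun k _ => ?_
    rw [hz, show s' k ^ 2 / (p' k + t * s' k) = s' k * (s' k / (p' k + t * s' k)) by ring]
    generalize s' k / (p' k + t * s' k) = q
    simp [Complex.normSq_apply]
    ring
  have hq2 : ∑ k, p' k * Complex.normSq (z k) + t * ∑ k, s' k * Complex.normSq (z k)
      = resolventSum (fun k => Complex.normSq (c' k)) p' s' t := by
    rw [Finset.mul_sum, ← Finset.sum_add_distrib]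
    refine Finset.sum_congr rfl fun k _ => ?_
    rcases (hs' k).eq_or_lt with h | h
    · simp [hz, ← h]
    · have hne : p' k + t * s' k ≠ 0 := (add_pos_of_nonneg_of_pos (hp' k) (mul_pos ht h)).ne'
      rw [hz, Complex.normSq_mul, Complex.normSq_ofReal]
      field_simp
  have hcy' : ∑ k, ((s k : ℂ) * (star (c k) * y k)).re
      = resolventSum (fun k => Complex.normSq (c' k)) p' s' t := by
    rw [← hq1, ← Complex.re_sum, hcy, Complex.re_sum]
  rw [Finset.sum_congr rfl fun k _ => hpt k, Finset.sum_add_distrib, Finset.sum_sub_distrib,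
    Finset.sum_add_distrib, ← Finset.mul_sum, ← Finset.mul_sum, hcy', hpy, hsy, hq2]
  simp only [resolventSum]
  ring

/-! ### Spectral data -/

/-- The operator with eigenvalues `p` in the orthonormal basis given by the columns of `U`. -/
def spectralMatrix {n : Type*} [Fintype n] [DecidableEq n] (U : Matrix n n ℂ) (p : n → ℝ) :
    Matrix n n ℂ :=
  U * diagonal (fun i => (p i : ℂ)) * Uᴴ

section Spectral

variable {n : Type*} [Fintype n] [DecidableEq n] {U V : Matrix n n ℂ}

lemma spectralMatrix_mul (hU : Uᴴ * U = 1) (p q : n → ℝ) :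
    spectralMatrix U p * spectralMatrix U q = spectralMatrix U (fun i => p i * q i) := by
  calc spectralMatrix U p * spectralMatrix U q
      = U * diagonal (fun i => (p i : ℂ)) * (Uᴴ * U) * diagonal (fun i => (q i : ℂ)) * Uᴴ := by
        simp only [spectralMatrix, Matrix.mul_assoc]
    _ = _ := by
        rw [hU, Matrix.mul_one, Matrix.mul_assoc U, diagonal_mul_diagonal, spectralMatrix]
        simp

lemma spectralMatrix_eq_sqrt_mul_sqrt (hU : Uᴴ * U = 1) {p : n → ℝ} (hp : ∀ i, 0 ≤ p i) :
    spectralMatrix U p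
      = spectralMatrix U (fun i => √(p i)) * spectralMatrix U (fun i => √(p i)) := by
  rw [spectralMatrix_mul hU]
  simp only [Real.mul_self_sqrt (hp _)]

lemma conjTranspose_spectralMatrix (p : n → ℝ) :
    (spectralMatrix U p)ᴴ = spectralMatrix U p := by
  simp [spectralMatrix, conjTranspose_mul, diagonal_conjTranspose, Matrix.mul_assoc,
    Pi.star_def]

lemma trace_mul_conjTranspose_mul_spectralMatrix (hV : Vᴴ * V = 1) (p : n → ℝ)
    (X : Matrix n n ℂ) : (X * Xᴴ * spectralMatrix U p).trace
      = ((∑ k : n × n, p k.1 * Complex.normSq ((Uᴴ * X * V) k.1 k.2) : ℝ) : ℂ) := by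
  have hV' : V * Vᴴ = 1 := mul_eq_one_comm.1 hV
  have h : (X * Xᴴ * spectralMatrix U p).trace
      = ((Uᴴ * X * V) * (Uᴴ * X * V)ᴴ * diagonal (fun i => (p i : ℂ))).trace := by
    calc (X * Xᴴ * spectralMatrix U p).trace
        = ((X * Xᴴ * U * diagonal (fun i => (p i : ℂ))) * Uᴴ).trace := by
          simp only [spectralMatrix, Matrix.mul_assoc]
      _ = (Uᴴ * (X * (V * Vᴴ) * Xᴴ * U * diagonal (fun i => (p i : ℂ)))).trace := by
          rw [trace_mul_comm, hV', Matrix.mul_one]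
      _ = _ := by simp only [conjTranspose_mul, conjTranspose_conjTranspose, Matrix.mul_assoc]
  rw [h]
  generalize Uᴴ * X * V = Y
  simp only [trace, diag_apply, mul_diagonal]
  simp only [Matrix.mul_apply, conjTranspose_apply,
    Fintype.sum_prod_type, Complex.ofReal_sum, Complex.ofReal_mul, ← Complex.mul_conj,
    Finset.sum_mul]
  exact Finset.sum_congr rfl fun i _ => Finset.sum_congr rfl fun j _ => mul_comm _ _

lemma trace_conjTranspose_mul_mul_spectralMatrix (hU : Uᴴ * U = 1) (s : n → ℝ)
    (X : Matrix n n ℂ) : (Xᴴ * X * spectralMatrix V s).trace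
      = ((∑ k : n × n, s k.2 * Complex.normSq ((Uᴴ * X * V) k.1 k.2) : ℝ) : ℂ) := by
  have hU' : U * Uᴴ = 1 := mul_eq_one_comm.1 hU
  have h : (Xᴴ * X * spectralMatrix V s).trace
      = ((Uᴴ * X * V)ᴴ * (Uᴴ * X * V) * diagonal (fun i => (s i : ℂ))).trace := by
    calc (Xᴴ * X * spectralMatrix V s).trace
        = ((Xᴴ * X * V * diagonal (fun i => (s i : ℂ))) * Vᴴ).trace := by
          simp only [spectralMatrix, Matrix.mul_assoc]
      _ = (Vᴴ * (Xᴴ * (U * Uᴴ) * X * V * diagonal (fun i => (s i : ℂ)))).trace := by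
          rw [trace_mul_comm, hU', Matrix.mul_one]
      _ = _ := by simp only [conjTranspose_mul, conjTranspose_conjTranspose, Matrix.mul_assoc]
  rw [h]
  generalize Uᴴ * X * V = Y
  simp only [trace, diag_apply, mul_diagonal]
  simp only [Matrix.mul_apply, conjTranspose_apply,
    Fintype.sum_prod_type_right, Complex.ofReal_sum, Complex.ofReal_mul, ← Complex.mul_conj,
    Finset.sum_mul]
  exact Finset.sum_congr rfl fun i _ => Finset.sum_congr rfl fun j _ => by
    rw [mul_comm, mul_comm (star _)]; rfl

lemma trace_mul_spectralMatrix (hU : Uᴴ * U = 1) (s : n → ℝ) (X : Matrix n n ℂ) :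
    (X * spectralMatrix V s).trace
      = ∑ k : n × n, (s k.2 : ℂ) * (star ((Uᴴ * V) k.1 k.2) * (Uᴴ * X * V) k.1 k.2) := by
  have hU' : U * Uᴴ = 1 := mul_eq_one_comm.1 hU
  have h : (X * spectralMatrix V s).trace
      = ((Uᴴ * V)ᴴ * (Uᴴ * X * V) * diagonal (fun i => (s i : ℂ))).trace := by
    calc (X * spectralMatrix V s).trace
        = ((X * V * diagonal (fun i => (s i : ℂ))) * Vᴴ).trace := by
          simp only [spectralMatrix, Matrix.mul_assoc]
      _ = (Vᴴ * ((U * Uᴴ) * X * V * diagonal (fun i => (s i : ℂ)))).trace := by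
          rw [trace_mul_comm, hU', Matrix.one_mul]
      _ = _ := by simp only [conjTranspose_mul, conjTranspose_conjTranspose, Matrix.mul_assoc]
  rw [h]
  generalize Uᴴ * X * V = Y
  generalize Uᴴ * V = C
  simp only [trace, diag_apply, mul_diagonal]
  simp only [Matrix.mul_apply, conjTranspose_apply,
    Fintype.sum_prod_type_right, Finset.sum_mul]
  exact Finset.sum_congr rfl fun i _ => Finset.sum_congr rfl fun j _ => mul_comm _ _

end Spectral

/-! ### Equality in the monotonicity of relative entropy -/

/-- If the states with spectral data `(U, p)`, `(V, s)` restrict along the unital `*`-embedding `ι`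
to those with spectral data `(U', p')`, `(V', s')` without loss of relative entropy, then
`ι (ρ'^{1/2} σ'^{-1/2}) σ^{1/2} = ρ^{1/2}`. -/
theorem embedding_sqrt_mul_sqrt_eq {n m : Type*} [Fintype n] [DecidableEq n] [Fintype m]
    [DecidableEq m] (ι : Matrix m m ℂ →ₗ[ℂ] Matrix n n ℂ)
    (hmul : ∀ X Y, ι (X * Y) = ι X * ι Y) (hstar : ∀ X, ι Xᴴ = (ι X)ᴴ) (hone : ι 1 = 1)
    {U V : Matrix n n ℂ} {U' V' : Matrix m m ℂ} (hU : Uᴴ * U = 1) (hV : Vᴴ * V = 1)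
    (hU' : U'ᴴ * U' = 1) (hV' : V'ᴴ * V' = 1) {p s : n → ℝ} {p' s' : m → ℝ}
    (hp : ∀ i, 0 ≤ p i) (hs : ∀ i, 0 ≤ s i) (hp' : ∀ i, 0 ≤ p' i) (hs' : ∀ i, 0 ≤ s' i)
    (hρ : ∀ X, (ι X * spectralMatrix U p).trace = (X * spectralMatrix U' p').trace)
    (hσ : ∀ X, (ι X * spectralMatrix V s).trace = (X * spectralMatrix V' s').trace)
    (hsupp : ∀ i j, s j = 0 → Complex.normSq ((Uᴴ * V) i j) * p i = 0)
    (hsupp' : ∀ i j, s' j = 0 → Complex.normSq ((U'ᴴ * V') i j) * p' i = 0)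
    (hent : logPotential (fun k : n × n => Complex.normSq ((Uᴴ * V) k.1 k.2))
        (fun k => p k.1) (fun k => s k.2) 0
      = logPotential (fun k : m × m => Complex.normSq ((U'ᴴ * V') k.1 k.2))
        (fun k => p' k.1) (fun k => s' k.2) 0) :
    ι (spectralMatrix U' (fun i => √(p' i)) * spectralMatrix V' (fun i => (√(s' i))⁻¹))
        * spectralMatrix V (fun i => √(s i)) = spectralMatrix U (fun i => √(p i)) := by
  have hUU : U * Uᴴ = 1 := mul_eq_one_comm.1 hU
  have hVV : V * Vᴴ = 1 := mul_eq_one_comm.1 hV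
  -- the compression of the solution of `ρ' A + t A σ' = σ'`, in the eigenbases of `ρ` and `σ`
  have hgap : ∀ t : ℝ, 0 < t → ∀ Z : Matrix m m ℂ,
      (∀ a b, Z a b = (U'ᴴ * V') a b * ((s' b / (p' a + t * s' b) : ℝ) : ℂ)) →
      ∑ k : n × n, (p k.1 + t * s k.2) *
        Complex.normSq ((Uᴴ * V) k.1 k.2 * ((s k.2 / (p k.1 + t * s k.2) : ℝ) : ℂ)
          - (Uᴴ * ι (U' * Z * V'ᴴ) * V) k.1 k.2)
      = resolventSum (fun k : n × n => Complex.normSq ((Uᴴ * V) k.1 k.2))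
          (fun k => p k.1) (fun k => s k.2) t
        - resolventSum (fun k : m × m => Complex.normSq ((U'ᴴ * V') k.1 k.2))
          (fun k => p' k.1) (fun k => s' k.2) t := by
    intro t ht Z hZ
    set A := U' * Z * V'ᴴ with hA
    have hZA : U'ᴴ * A * V' = Z := by
      calc U'ᴴ * A * V' = (U'ᴴ * U') * Z * (V'ᴴ * V') := by simp only [hA, Matrix.mul_assoc]
        _ = Z := by rw [hU', hV', Matrix.one_mul, Matrix.mul_one]
    refine sum_mul_normSq_sub_eq_resolventSum_sub
      (c := fun k : n × n => (Uᴴ * V) k.1 k.2) (y := fun k => (Uᴴ * ι A * V) k.1 k.2)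
      (p := fun k => p k.1) (s := fun k => s k.2) (c' := fun k : m × m => (U'ᴴ * V') k.1 k.2)
      (p' := fun k => p' k.1) (s' := fun k => s' k.2) (z := fun k => Z k.1 k.2)
      (fun k => hp k.1) (fun k => hs k.2) (fun k => hp' k.1) (fun k => hs' k.2) ht
      (fun k => hZ k.1 k.2) ?_ ?_ ?_
    · have h := hρ (A * Aᴴ)
      rw [hmul, hstar, trace_mul_conjTranspose_mul_spectralMatrix hV,
        trace_mul_conjTranspose_mul_spectralMatrix hV', hZA] at h
      exact Complex.ofReal_injective h
    · have h := hσ (Aᴴ * A)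
      rw [hmul, hstar, trace_conjTranspose_mul_mul_spectralMatrix hU,
        trace_conjTranspose_mul_mul_spectralMatrix hU', hZA] at h
      exact Complex.ofReal_injective h
    · have h := hσ A
      rwa [trace_mul_spectralMatrix hU, trace_mul_spectralMatrix hU', hZA] at h
  have hterm : ∀ t : ℝ, 0 < t → ∀ k : n × n, 0 ≤ p k.1 + t * s k.2 := fun t ht k =>
    add_nonneg (hp _) (mul_nonneg ht.le (hs _))
  have hmassp : ∑ k : n × n, Complex.normSq ((Uᴴ * V) k.1 k.2) * p k.1
      = ∑ k : m × m, Complex.normSq ((U'ᴴ * V') k.1 k.2) * p' k.1 := by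
    have h := hρ (1 * 1ᴴ)
    rw [hmul, hstar, trace_mul_conjTranspose_mul_spectralMatrix hV,
      trace_mul_conjTranspose_mul_spectralMatrix hV', hone, Matrix.mul_one, Matrix.mul_one] at h
    simpa only [mul_comm] using Complex.ofReal_injective h
  have hmasss : ∑ k : n × n, Complex.normSq ((Uᴴ * V) k.1 k.2) * s k.2
      = ∑ k : m × m, Complex.normSq ((U'ᴴ * V') k.1 k.2) * s' k.2 := by
    have h := hσ (1ᴴ * 1)
    rw [hmul, hstar, trace_conjTranspose_mul_mul_spectralMatrix hU,
      trace_conjTranspose_mul_mul_spectralMatrix hU', hone, Matrix.mul_one, Matrix.mul_one] at h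
    simpa only [mul_comm] using Complex.ofReal_injective h
  have hres : ∀ t : ℝ, 0 < t → _ = _ := fun t ht =>
    resolventSum_eq_of_logPotential_eq (fun k : n × n => hp k.1) (fun k => hs k.2)
      (fun k => hsupp k.1 k.2) (fun k : m × m => hp' k.1) (fun k => hs' k.2)
      (fun k => hsupp' k.1 k.2) hmassp hmasss hent
      (fun t ht => by
        rw [← sub_nonneg, ← hgap t ht (Matrix.of fun a b => _) fun a b => rfl]
        exact Finset.sum_nonneg fun k _ => mul_nonneg (hterm t ht k) (Complex.normSq_nonneg _)) ht
  -- vanishing of the gap identifies the two solutions on the support of `σ`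
  have hcoord : ∀ i j, 0 < s j → ∀ t : ℝ, 0 < t →
      (Uᴴ * ι (U' * (Matrix.of fun a b =>
        (U'ᴴ * V') a b * ((s' b / (p' a + t * s' b) : ℝ) : ℂ)) * V'ᴴ) * V) i j
      = (Uᴴ * V) i j * ((s j / (p i + t * s j) : ℝ) : ℂ) := by
    intro i j hj t ht
    have h := hgap t ht (Matrix.of fun a b => _) fun a b => rfl
    rw [← hres t ht, sub_self, Finset.sum_eq_zero_iff_of_nonneg
      fun k _ => mul_nonneg (hterm t ht k) (Complex.normSq_nonneg _)] at h
    have h1 := h (i, j) (Finset.mem_univ _)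
    have h2 : p i + t * s j ≠ 0 := (add_pos_of_nonneg_of_pos (hp i) (mul_pos ht hj)).ne'
    have h3 := Complex.normSq_eq_zero.1 ((mul_eq_zero.1 h1).resolve_left h2)
    exact (sub_eq_zero.1 h3).symm
  have hsqrt : ∀ i j, 0 < s j →
      (Uᴴ * ι (U' * (Matrix.of fun a b =>
        (U'ᴴ * V') a b * ((√(p' a / s' b) : ℝ) : ℂ)) * V'ᴴ) * V) i j
      = (Uᴴ * V) i j * ((√(p i / s j) : ℝ) : ℂ) := by
    intro i j hj
    let Λ : Matrix m m ℂ →ₗ[ℂ] ℂ :=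
      { toFun := fun Z => (Uᴴ * ι (U' * Z * V'ᴴ) * V) i j
        map_add' := fun X Y => by
          simp only [Matrix.mul_add, Matrix.add_mul, map_add, Matrix.add_apply]
        map_smul' := fun c X => by
          simp only [Matrix.mul_smul, Matrix.smul_mul, map_smul, Matrix.smul_apply,
            RingHom.id_apply] }
    have hΛ : ∀ Z : Matrix m m ℂ, Λ Z = ∑ k : m × m, Λ (Matrix.single k.1 k.2 1) * Z k.1 k.2 := by
      intro Z
      conv_lhs => rw [matrix_eq_sum_single Z]
      simp only [map_sum, Fintype.sum_prod_type]
      refine Finset.sum_congr rfl fun a _ => Finset.sum_congr rfl fun b _ => ?_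
      rw [mul_comm, ← smul_eq_mul, ← map_smul, Matrix.smul_single, smul_eq_mul, mul_one]
    let α : Option (m × m) → ℂ := fun k => k.elim (-(Uᴴ * V) i j) fun k =>
      if s' k.2 = 0 then 0 else Λ (Matrix.single k.1 k.2 1) * (U'ᴴ * V') k.1 k.2
    let x : Option (m × m) → ℝ := fun k => k.elim (p i / s j) fun k => p' k.1 / s' k.2
    have hx : ∀ k, 0 ≤ x k := by
      rintro (_ | k)
      · exact div_nonneg (hp _) (hs _)
      · exact div_nonneg (hp' _) (hs' _)
    have hinv : ∀ p s t : ℝ, s ≠ 0 → (p / s + t)⁻¹ = s / (p + t * s) := by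
      intro p s t h
      rw [div_add' _ _ _ h, inv_div]
    have hzero : ∀ t : ℝ, 0 < t → ∑ k, α k * ((x k + t : ℝ) : ℂ)⁻¹ = 0 := by
      intro t ht
      have h := hcoord i j hj t ht
      change Λ _ = _ at h
      rw [hΛ] at h
      rw [Fintype.sum_option]
      simp only [α, x, Option.elim_none, Option.elim_some]
      rw [← Complex.ofReal_inv, hinv _ _ _ hj.ne', neg_mul, ← h, neg_add_eq_zero]
      refine Finset.sum_congr rfl fun k _ => ?_
      by_cases hk : s' k.2 = 0
      · simp [hk]
      · rw [if_neg hk, ← Complex.ofReal_inv, hinv _ _ _ hk, Matrix.of_apply, mul_assoc]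
    have h := sum_mul_apply_eq_zero_of_sum_div_eq_zero α x hx hzero fun y => ((√y : ℝ) : ℂ)
    rw [Fintype.sum_option] at h
    simp only [α, x, Option.elim_none, Option.elim_some] at h
    rw [neg_mul, neg_add_eq_zero] at h
    change Λ _ = _
    rw [hΛ, h]
    refine Finset.sum_congr rfl fun k _ => ?_
    by_cases hk : s' k.2 = 0
    · simp [hk]
    · rw [if_neg hk, Matrix.of_apply, mul_assoc]
  have hdiag : ∀ (C : Matrix m m ℂ) (f g : m → ℝ),
      diagonal (fun i => (f i : ℂ)) * C * diagonal (fun i => (g i : ℂ))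
        = Matrix.of fun a b => C a b * ((f a * g b : ℝ) : ℂ) := by
    intro C f g
    ext a b
    rw [mul_diagonal, diagonal_mul, Matrix.of_apply, Complex.ofReal_mul]
    ring
  have hprod : spectralMatrix U' (fun i => √(p' i)) * spectralMatrix V' (fun i => (√(s' i))⁻¹)
      = U' * (Matrix.of fun a b => (U'ᴴ * V') a b * ((√(p' a / s' b) : ℝ) : ℂ)) * V'ᴴ := by
    have : (Matrix.of fun a b => (U'ᴴ * V') a b * ((√(p' a / s' b) : ℝ) : ℂ))
        = diagonal (fun i => ((√(p' i) : ℝ) : ℂ)) * (U'ᴴ * V')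
          * diagonal (fun i => (((√(s' i))⁻¹ : ℝ) : ℂ)) := by
      rw [hdiag]
      ext a b
      rw [Matrix.of_apply, Matrix.of_apply, Real.sqrt_div (hp' a), div_eq_mul_inv]
    rw [this]
    simp only [spectralMatrix, Matrix.mul_assoc]
  have hfinal : Uᴴ * ι (spectralMatrix U' (fun i => √(p' i))
        * spectralMatrix V' (fun i => (√(s' i))⁻¹)) * V * diagonal (fun i => ((√(s i) : ℝ) : ℂ))
      = diagonal (fun i => ((√(p i) : ℝ) : ℂ)) * (Uᴴ * V) := by
    ext i j
    rw [mul_diagonal, diagonal_mul, hprod]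
    rcases (hs j).eq_or_lt with h | h
    · rcases mul_eq_zero.1 (hsupp i j h.symm) with h1 | h1
      · rw [← h, Complex.normSq_eq_zero.1 h1]
        simp
      · rw [← h, h1]
        simp
    · rw [hsqrt i j h, mul_assoc, ← Complex.ofReal_mul, Real.sqrt_div (hp i),
        div_mul_cancel₀ _ (Real.sqrt_pos.2 h).ne', mul_comm]
  generalize ι (spectralMatrix U' (fun i => √(p' i))
    * spectralMatrix V' (fun i => (√(s' i))⁻¹)) = B at hfinal ⊢
  calc B * spectralMatrix V (fun i => √(s i))
      = (U * Uᴴ) * B * V * diagonal (fun i => ((√(s i) : ℝ) : ℂ)) * Vᴴ := by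
        rw [hUU, Matrix.one_mul]
        simp only [spectralMatrix, Matrix.mul_assoc]
    _ = U * (Uᴴ * B * V * diagonal (fun i => ((√(s i) : ℝ) : ℂ))) * Vᴴ := by
        simp only [Matrix.mul_assoc]
    _ = U * diagonal (fun i => ((√(p i) : ℝ) : ℂ)) * Uᴴ * (V * Vᴴ) := by
        rw [hfinal]
        simp only [Matrix.mul_assoc]
    _ = _ := by rw [hVV, Matrix.mul_one, spectralMatrix]

/-- Petz recovery: under the hypotheses of `embedding_sqrt_mul_sqrt_eq`,
`ρ = σ^{1/2} ι (σ'^{-1/2} ρ' σ'^{-1/2}) σ^{1/2}`. -/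
theorem spectralMatrix_eq_petz {n m : Type*} [Fintype n] [DecidableEq n] [Fintype m]
    [DecidableEq m] (ι : Matrix m m ℂ →ₗ[ℂ] Matrix n n ℂ)
    (hmul : ∀ X Y, ι (X * Y) = ι X * ι Y) (hstar : ∀ X, ι Xᴴ = (ι X)ᴴ)
    {U V : Matrix n n ℂ} {U' V' : Matrix m m ℂ} (hU : Uᴴ * U = 1)
    (hU' : U'ᴴ * U' = 1) {p s : n → ℝ} {p' s' : m → ℝ}
    (hp : ∀ i, 0 ≤ p i) (hp' : ∀ i, 0 ≤ p' i)
    (h : ι (spectralMatrix U' (fun i => √(p' i)) * spectralMatrix V' (fun i => (√(s' i))⁻¹))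
        * spectralMatrix V (fun i => √(s i)) = spectralMatrix U (fun i => √(p i))) :
    spectralMatrix U p = spectralMatrix V (fun i => √(s i))
      * ι (spectralMatrix V' (fun i => (√(s' i))⁻¹) * spectralMatrix U' p'
        * spectralMatrix V' (fun i => (√(s' i))⁻¹)) * spectralMatrix V (fun i => √(s i)) := by
  have h' := congrArg conjTranspose h
  rw [conjTranspose_mul, conjTranspose_spectralMatrix, conjTranspose_spectralMatrix, ← hstar,
    conjTranspose_mul, conjTranspose_spectralMatrix, conjTranspose_spectralMatrix] at h'
  rw [spectralMatrix_eq_sqrt_mul_sqrt hU hp, spectralMatrix_eq_sqrt_mul_sqrt hU' hp']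
  nth_rw 1 [← h']
  rw [← h]
  simp only [hmul, Matrix.mul_assoc]

/-! ### Blocks and partial traces -/

/-- The `(x, y)` block of an operator on a tensor product. -/
def tensorBlock {R A B : Type*} (M : Matrix (R × A) (R × B) ℂ) (x y : R) : Matrix A B ℂ :=
  Matrix.of fun a b => M (x, a) (y, b)

section Blocks

variable {R A B E : Type*}

lemma tensorBlock_ext {M N : Matrix (R × A) (R × B) ℂ}
    (h : ∀ x y, tensorBlock M x y = tensorBlock N x y) : M = N := by
  ext ⟨x, a⟩ ⟨y, b⟩
  exact congrFun (congrFun (h x y) a) b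

lemma tensorBlock_one_kronecker_mul {C : Type*} [Fintype R] [DecidableEq R] [Fintype A]
    (X : Matrix C A ℂ) (M : Matrix (R × A) (R × B) ℂ) (x y : R) :
    tensorBlock (((1 : Matrix R R ℂ) ⊗ₖ X) * M) x y = X * tensorBlock M x y := by
  ext a b
  simp [tensorBlock, Matrix.mul_apply, Fintype.sum_prod_type, Matrix.one_apply, ite_mul]

lemma tensorBlock_mul_one_kronecker {C : Type*} [Fintype R] [DecidableEq R] [Fintype B]
    (X : Matrix B C ℂ) (M : Matrix (R × A) (R × B) ℂ) (x y : R) :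
    tensorBlock (M * ((1 : Matrix R R ℂ) ⊗ₖ X)) x y = tensorBlock M x y * X := by
  ext a b
  simp [tensorBlock, Matrix.mul_apply, Fintype.sum_prod_type, Matrix.one_apply, ite_mul]

lemma conjTranspose_one_kronecker [DecidableEq R] (X : Matrix A B ℂ) :
    ((1 : Matrix R R ℂ) ⊗ₖ X)ᴴ = (1 : Matrix R R ℂ) ⊗ₖ Xᴴ := by
  rw [conjTranspose_kronecker, conjTranspose_one]

lemma ptraceLeft_eq_sum_tensorBlock [Fintype R] (M : Matrix (R × A) (R × A) ℂ) :
    ptraceLeft M = ∑ r, tensorBlock M r r := by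
  ext a b
  simp [ptraceLeft, tensorBlock, Matrix.sum_apply]

lemma tensorBlock_ptrace3E [Fintype E] (M : Matrix (R × A × E) (R × A × E) ℂ) (x y : R) :
    tensorBlock (ptrace3E M) x y = ptraceRight (tensorBlock M x y) := rfl

lemma posSemidef_ptraceLeft [Fintype R] {M : Matrix (R × A) (R × A) ℂ} (hM : M.PosSemidef) :
    (ptraceLeft M).PosSemidef := by
  rw [ptraceLeft_eq_sum_tensorBlock]
  exact posSemidef_sum _ fun r _ => hM.submatrix fun a => (r, a)

lemma posSemidef_ptrace3E [Fintype E] {M : Matrix (R × A × E) (R × A × E) ℂ}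
    (hM : M.PosSemidef) : (ptrace3E M).PosSemidef := by
  have : ptrace3E M = ∑ e, M.submatrix (fun x : R × A => (x.1, x.2, e))
      (fun x : R × A => (x.1, x.2, e)) := by
    ext a b
    simp [ptrace3E, Matrix.sum_apply]
  rw [this]
  exact posSemidef_sum _ fun e _ => hM.submatrix _

lemma ptraceLeft_ptrace3E [Fintype R] [Fintype E] (M : Matrix (R × A × E) (R × A × E) ℂ) :
    ptraceLeft (ptrace3E M) = ptraceRight (ptraceLeft M) := by
  ext a b
  simp only [ptraceLeft, ptrace3E, ptraceRight, Matrix.of_apply]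
  exact Finset.sum_comm

lemma ptrace3E_one_kronecker [DecidableEq R] [Fintype E] (M : Matrix (A × E) (A × E) ℂ) :
    ptrace3E ((1 : Matrix R R ℂ) ⊗ₖ M) = (1 : Matrix R R ℂ) ⊗ₖ ptraceRight M := by
  ext a b
  simp [ptrace3E, ptraceRight, Finset.mul_sum]

end Blocks

/-- The embedding `X ↦ X ⊗ 1_E` of operators on `R ⊗ Q` into operators on `R ⊗ Q ⊗ E`. -/
def tensorOneE (R Q E : Type*) [DecidableEq E] :
    Matrix (R × Q) (R × Q) ℂ →ₗ[ℂ] Matrix (R × Q × E) (R × Q × E) ℂ where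
  toFun X := (X ⊗ₖ (1 : Matrix E E ℂ)).submatrix (Equiv.prodAssoc R Q E).symm
    (Equiv.prodAssoc R Q E).symm
  map_add' X Y := by rw [add_kronecker]; rfl
  map_smul' c X := by rw [smul_kronecker]; rfl

section TensorOne

variable {R Q E : Type*} [DecidableEq E]

lemma tensorOneE_apply (X : Matrix (R × Q) (R × Q) ℂ) :
    tensorOneE R Q E X = (X ⊗ₖ (1 : Matrix E E ℂ)).submatrix (Equiv.prodAssoc R Q E).symm
      (Equiv.prodAssoc R Q E).symm := rfl

lemma tensorOneE_mul [Fintype R] [Fintype Q] [Fintype E] (X Y : Matrix (R × Q) (R × Q) ℂ) :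
    tensorOneE R Q E (X * Y) = tensorOneE R Q E X * tensorOneE R Q E Y := by
  rw [tensorOneE_apply, tensorOneE_apply, tensorOneE_apply, submatrix_mul_equiv,
    ← mul_kronecker_mul, Matrix.one_mul]

lemma tensorOneE_conjTranspose (X : Matrix (R × Q) (R × Q) ℂ) :
    tensorOneE R Q E Xᴴ = (tensorOneE R Q E X)ᴴ := by
  rw [tensorOneE_apply, tensorOneE_apply, conjTranspose_submatrix, conjTranspose_kronecker,
    conjTranspose_one]

lemma tensorOneE_one [DecidableEq R] [DecidableEq Q] : tensorOneE R Q E 1 = 1 := by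
  rw [tensorOneE_apply, one_kronecker_one, submatrix_one_equiv]

lemma tensorBlock_tensorOneE (X : Matrix (R × Q) (R × Q) ℂ) (x y : R) :
    tensorBlock (tensorOneE R Q E X) x y = tensorBlock X x y ⊗ₖ (1 : Matrix E E ℂ) := rfl

lemma trace_tensorOneE_mul [Fintype R] [Fintype Q] [Fintype E] (X : Matrix (R × Q) (R × Q) ℂ)
    (M : Matrix (R × Q × E) (R × Q × E) ℂ) :
    (tensorOneE R Q E X * M).trace = (X * ptrace3E M).trace := by
  simp only [trace, diag_apply, Matrix.mul_apply, tensorOneE_apply, ptrace3E, submatrix_apply,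
    Matrix.of_apply, Fintype.sum_prod_type, Equiv.prodAssoc_symm_apply, kronecker_apply,
    Matrix.one_apply, mul_ite, mul_one, mul_zero, ite_mul, zero_mul, Finset.sum_ite_eq,
    Finset.mem_univ, if_true, Finset.mul_sum]
  refine Finset.sum_congr rfl fun r _ => Finset.sum_congr rfl fun q _ => ?_
  rw [Finset.sum_comm]
  refine Finset.sum_congr rfl fun r' _ => ?_
  rw [Finset.sum_comm]

end TensorOne

/-! ### Relative entropy to a marginal -/

lemma exists_spectralMatrix {n : Type*} [Fintype n] [DecidableEq n] {A : Matrix n n ℂ}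
    (hA : A.PosSemidef) : ∃ (U : Matrix n n ℂ) (p : n → ℝ), Uᴴ * U = 1 ∧ (∀ i, 0 ≤ p i) ∧
      A = spectralMatrix U p ∧ vnEntropy A = ∑ i, Real.negMulLog (p i) := by
  refine ⟨hA.isHermitian.eigenvectorUnitary, hA.isHermitian.eigenvalues, ?_,
    hA.eigenvalues_nonneg, ?_, ?_⟩
  · exact Unitary.coe_star_mul_self hA.isHermitian.eigenvectorUnitary
  · exact hA.isHermitian.spectral_theorem
  · rw [vnEntropy, dif_pos hA.isHermitian]

section Marginal

variable {R B : Type*} [Fintype R] [DecidableEq R] [Fintype B] [DecidableEq B]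

lemma one_kronecker_isometry {W : Matrix B B ℂ} (hW : Wᴴ * W = 1) :
    ((1 : Matrix R R ℂ) ⊗ₖ W)ᴴ * ((1 : Matrix R R ℂ) ⊗ₖ W) = 1 := by
  rw [conjTranspose_one_kronecker, ← mul_kronecker_mul, hW, Matrix.one_mul, one_kronecker_one]

lemma spectralMatrix_one_kronecker (W : Matrix B B ℂ) (q : B → ℝ) :
    spectralMatrix ((1 : Matrix R R ℂ) ⊗ₖ W) (fun k => q k.2)
      = (1 : Matrix R R ℂ) ⊗ₖ spectralMatrix W q := by
  have : diagonal (fun k : R × B => (q k.2 : ℂ))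
      = (1 : Matrix R R ℂ) ⊗ₖ diagonal (fun j => (q j : ℂ)) := by
    rw [← diagonal_one, diagonal_kronecker_diagonal]
    simp
  rw [spectralMatrix, this, conjTranspose_one_kronecker, ← mul_kronecker_mul,
    ← mul_kronecker_mul, Matrix.one_mul, Matrix.one_mul, spectralMatrix]

variable {U : Matrix (R × B) (R × B) ℂ} {W : Matrix B B ℂ} {p : R × B → ℝ} {q : B → ℝ}

lemma sum_normSq_overlap_mul (hW : Wᴴ * W = 1)
    (h : ptraceLeft (spectralMatrix U p) = spectralMatrix W q) (j : B) :
    ∑ r, ∑ i, Complex.normSq ((Uᴴ * ((1 : Matrix R R ℂ) ⊗ₖ W)) i (r, j)) * p i = q j := by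
  set V := (1 : Matrix R R ℂ) ⊗ₖ W with hV
  have h1 : ∑ r, (Vᴴ * spectralMatrix U p * V) (r, j) (r, j) = (q j : ℂ) := by
    have h2 : ∑ r, tensorBlock (Vᴴ * spectralMatrix U p * V) r r
        = diagonal fun j => (q j : ℂ) := by
      simp only [hV, conjTranspose_one_kronecker, tensorBlock_mul_one_kronecker,
        tensorBlock_one_kronecker_mul]
      rw [← Matrix.sum_mul, ← Matrix.mul_sum, ← ptraceLeft_eq_sum_tensorBlock, h]
      calc Wᴴ * spectralMatrix W q * W
          = (Wᴴ * W) * diagonal (fun j => (q j : ℂ)) * (Wᴴ * W) := by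
            simp only [spectralMatrix, Matrix.mul_assoc]
        _ = _ := by rw [hW, Matrix.one_mul, Matrix.mul_one]
    have h3 := congrFun (congrFun h2 j) j
    rw [Matrix.sum_apply, diagonal_apply_eq] at h3
    exact h3
  have h4 : Vᴴ * spectralMatrix U p * V
      = (Uᴴ * V)ᴴ * (diagonal (fun i => (p i : ℂ)) * (Uᴴ * V)) := by
    simp only [spectralMatrix, conjTranspose_mul, conjTranspose_conjTranspose, Matrix.mul_assoc]
  rw [h4] at h1
  refine Complex.ofReal_injective ?_
  rw [← h1]
  simp only [Complex.ofReal_sum, Complex.ofReal_mul, ← Complex.mul_conj]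
  refine Finset.sum_congr rfl fun r _ => ?_
  rw [Matrix.mul_apply]
  refine Finset.sum_congr rfl fun i _ => ?_
  rw [diagonal_mul, conjTranspose_apply, starRingEnd_apply]
  ring

lemma normSq_overlap_mul_eq_zero (hW : Wᴴ * W = 1) (hp : ∀ i, 0 ≤ p i)
    (h : ptraceLeft (spectralMatrix U p) = spectralMatrix W q) (i k : R × B) (hk : q k.2 = 0) :
    Complex.normSq ((Uᴴ * ((1 : Matrix R R ℂ) ⊗ₖ W)) i k) * p i = 0 := by
  have h1 := sum_normSq_overlap_mul hW h k.2
  rw [hk, Finset.sum_eq_zero_iff_of_nonneg fun r _ => Finset.sum_nonneg fun i _ =>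
    mul_nonneg (Complex.normSq_nonneg _) (hp i)] at h1
  have h2 := h1 k.1 (Finset.mem_univ _)
  rw [Finset.sum_eq_zero_iff_of_nonneg fun i _ =>
    mul_nonneg (Complex.normSq_nonneg _) (hp i)] at h2
  exact h2 i (Finset.mem_univ _)

lemma logPotential_overlap_zero (hU : Uᴴ * U = 1) (hW : Wᴴ * W = 1)
    (h : ptraceLeft (spectralMatrix U p) = spectralMatrix W q) :
    logPotential (fun k : (R × B) × (R × B) =>
        Complex.normSq ((Uᴴ * ((1 : Matrix R R ℂ) ⊗ₖ W)) k.1 k.2))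
      (fun k => p k.1) (fun k => q k.2.2) 0
      = ∑ j, Real.negMulLog (q j) - ∑ i, Real.negMulLog (p i) := by
  have hrow : ∀ i, ∑ j, Complex.normSq ((Uᴴ * ((1 : Matrix R R ℂ) ⊗ₖ W)) i j) = 1 := by
    intro i
    have h1 : (Uᴴ * ((1 : Matrix R R ℂ) ⊗ₖ W)) * (Uᴴ * ((1 : Matrix R R ℂ) ⊗ₖ W))ᴴ = 1 := by
      have h2 := mul_eq_one_comm.1 (one_kronecker_isometry (R := R) hW)
      calc _ = Uᴴ * (((1 : Matrix R R ℂ) ⊗ₖ W) * ((1 : Matrix R R ℂ) ⊗ₖ W)ᴴ) * U := by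
            simp only [conjTranspose_mul, conjTranspose_conjTranspose, Matrix.mul_assoc]
        _ = 1 := by rw [h2, Matrix.mul_one, hU]
    have h3 := congrFun (congrFun h1 i) i
    rw [Matrix.mul_apply, Matrix.one_apply_eq] at h3
    refine Complex.ofReal_injective ?_
    rw [Complex.ofReal_one, ← h3, Complex.ofReal_sum]
    exact Finset.sum_congr rfl fun j _ => (Complex.mul_conj _).symm
  have hcol := sum_normSq_overlap_mul hW h
  generalize Uᴴ * ((1 : Matrix R R ℂ) ⊗ₖ W) = C at hrow hcol ⊢
  simp only [logPotential, zero_mul, add_zero, mul_sub, Finset.sum_sub_distrib]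
  have e1 : ∑ k : (R × B) × (R × B), Complex.normSq (C k.1 k.2) * p k.1 * Real.log (p k.1)
      = -∑ i, Real.negMulLog (p i) := by
    rw [Fintype.sum_prod_type, ← Finset.sum_neg_distrib]
    refine Finset.sum_congr rfl fun i _ => ?_
    simp only [mul_assoc]
    rw [← Finset.sum_mul, hrow, Real.negMulLog]
    ring
  have e2 : ∑ k : (R × B) × (R × B), Complex.normSq (C k.1 k.2) * p k.1 * Real.log (q k.2.2)
      = -∑ j, Real.negMulLog (q j) := by
    rw [Fintype.sum_prod_type_right, Fintype.sum_prod_type_right, ← Finset.sum_neg_distrib]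
    refine Finset.sum_congr rfl fun j _ => ?_
    simp only [← Finset.sum_mul]
    rw [hcol, Real.negMulLog]
    ring
  rw [e1, e2]
  ring

end Marginal

/-! ### Kraus maps -/

/-- The map `X ↦ ∑ₖ Aₖ X Aₖ†`. -/
def krausMap {κ A B : Type*} [Fintype κ] [Fintype A] (K : κ → Matrix B A ℂ) :
    Matrix A A ℂ →ₗ[ℂ] Matrix B B ℂ where
  toFun X := ∑ k, K k * X * (K k)ᴴ
  map_add' X Y := by simp only [Matrix.mul_add, Matrix.add_mul, Finset.sum_add_distrib]
  map_smul' c X := by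
    simp only [Matrix.mul_smul, Matrix.smul_mul, Finset.smul_sum, RingHom.id_apply]

lemma krausMap_apply {κ A B : Type*} [Fintype κ] [Fintype A] (K : κ → Matrix B A ℂ)
    (X : Matrix A A ℂ) : krausMap K X = ∑ k, K k * X * (K k)ᴴ := rfl

lemma tensorBlock_idTensor {n A B : Type*} (Φ : Matrix A A ℂ →ₗ[ℂ] Matrix B B ℂ)
    (M : Matrix (n × A) (n × A) ℂ) (x y : n) :
    tensorBlock (idTensor n Φ M) x y = Φ (tensorBlock M x y) := rfl

lemma isCPTP_krausMap {κ A B : Type*} [Fintype κ] [Fintype A] [DecidableEq A] [Fintype B]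
    (K : κ → Matrix B A ℂ) (hK : ∑ k, (K k)ᴴ * K k = 1) : IsCPTP (krausMap K) := by
  refine ⟨fun k M hM => ?_, fun M => ?_⟩
  · have : idTensor (Fin k) (krausMap K) M
        = ∑ i, ((1 : Matrix (Fin k) (Fin k) ℂ) ⊗ₖ K i) * M
          * ((1 : Matrix (Fin k) (Fin k) ℂ) ⊗ₖ K i)ᴴ := by
      refine tensorBlock_ext fun x y => ?_
      have hsum : ∀ N : κ → Matrix (Fin k × B) (Fin k × B) ℂ,
          tensorBlock (∑ i, N i) x y = ∑ i, tensorBlock (N i) x y := by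
        intro N
        ext a b
        simp [tensorBlock, Matrix.sum_apply]
      rw [tensorBlock_idTensor, hsum, krausMap_apply]
      simp only [conjTranspose_one_kronecker, tensorBlock_mul_one_kronecker,
        tensorBlock_one_kronecker_mul]
    rw [this]
    exact posSemidef_sum _ fun i _ => hM.mul_mul_conjTranspose_same _
  · rw [krausMap_apply, trace_sum]
    simp only [trace_mul_cycle _ M]
    rw [← trace_sum, ← Matrix.sum_mul, hK, Matrix.one_mul]

lemma ptraceRight_mul_kronecker_one_mul {Q E Q' E' : Type*} [Fintype Q] [Fintype E]
    [DecidableEq E] [Fintype E'] (G : Matrix (Q' × E') (Q × E) ℂ) (Y : Matrix Q Q ℂ) :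
    ptraceRight (G * (Y ⊗ₖ (1 : Matrix E E ℂ)) * Gᴴ)
      = ∑ k : E' × E, G.submatrix (fun a => (a, k.1)) (fun b => (b, k.2)) * Y
        * (G.submatrix (fun a => (a, k.1)) (fun b => (b, k.2)))ᴴ := by
  ext a b
  simp only [ptraceRight, Matrix.of_apply, Matrix.sum_apply, Matrix.mul_apply,
    Fintype.sum_prod_type, kronecker_apply, Matrix.one_apply, mul_ite, mul_one, mul_zero,
    Finset.sum_ite_eq', Finset.mem_univ, if_true, submatrix_apply, conjTranspose_apply]
  refine Finset.sum_congr rfl fun e' _ => ?_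
  exact Finset.sum_comm

lemma ptraceRight_conjTranspose_mul_self {Q E Q' E' : Type*} [Fintype E] [Fintype Q']
    [Fintype E'] (G : Matrix (Q' × E') (Q × E) ℂ) :
    ptraceRight (Gᴴ * G)
      = ∑ k : E' × E, (G.submatrix (fun a => (a, k.1)) (fun b => (b, k.2)))ᴴ
        * G.submatrix (fun a => (a, k.1)) (fun b => (b, k.2)) := by
  ext a b
  simp only [ptraceRight, Matrix.of_apply, Matrix.sum_apply, Matrix.mul_apply,
    Fintype.sum_prod_type, submatrix_apply, conjTranspose_apply]
  rw [Finset.sum_congr rfl fun e _ => Finset.sum_comm, Finset.sum_comm]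

/-- If `I(R;E|Q)_ρ = 0`, then every joint system-environment isometric
evolution yields CPTP reduced dynamics on the reference-system pair. -/
theorem stmt2 {R Q E : Type} [Fintype R] [DecidableEq R] [Fintype Q] [DecidableEq Q]
    [Fintype E] [DecidableEq E]
    (ρ : Matrix (R × Q × E) (R × Q × E) ℂ) (hρ : IsState ρ)
    (hMarkov : condMutualInfo ρ = 0) :
    ∀ (Q' E' : Type) [Fintype Q'] [DecidableEq Q'] [Fintype E'] [DecidableEq E']
      (V : Matrix (Q' × E') (Q × E) ℂ), Vᴴ * V = 1 →
      ∃ ℰ : Matrix Q Q ℂ →ₗ[ℂ] Matrix Q' Q' ℂ, IsCPTP ℰ ∧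
        ptrace3E (((1 : Matrix R R ℂ) ⊗ₖ V) * ρ * ((1 : Matrix R R ℂ) ⊗ₖ V)ᴴ)
          = idTensor R ℰ (ptrace3E ρ) := by
  intro Q' E' _ _ _ _ V hV
  obtain ⟨hpos, htr⟩ := hρ
  obtain ⟨U, p, hU, hp, hρU, hS⟩ := exists_spectralMatrix hpos
  obtain ⟨U', p', hU', hp', hρU', hS'⟩ := exists_spectralMatrix (posSemidef_ptrace3E hpos)
  obtain ⟨W, q, hW, hq, hρW, hSW⟩ := exists_spectralMatrix (posSemidef_ptraceLeft hpos)
  obtain ⟨W', q', hW', hq', hρW', hSW'⟩ :=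
    exists_spectralMatrix (posSemidef_ptraceLeft (posSemidef_ptrace3E hpos))
  have hmarg : ptraceLeft (spectralMatrix U p) = spectralMatrix W q := by rw [← hρU, hρW]
  have hmarg' : ptraceLeft (spectralMatrix U' p') = spectralMatrix W' q' := by
    rw [← hρU', hρW']
  have hρQ : ptraceRight (spectralMatrix W q) = spectralMatrix W' q' := by
    rw [← hρW, ← hρW', ptraceLeft_ptrace3E]
  -- vanishing conditional mutual information is equality of relative entropies
  have hsqrt := embedding_sqrt_mul_sqrt_eq (tensorOneE R Q E) tensorOneE_mul
    tensorOneE_conjTranspose tensorOneE_one hU (one_kronecker_isometry (R := R) hW) hU'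
    (one_kronecker_isometry (R := R) hW') hp (s := fun k => q k.2) (fun k => hq k.2) hp'
    (s' := fun k => q' k.2) (fun k => hq' k.2)
    (fun X => by rw [trace_tensorOneE_mul, ← hρU, ← hρU'])
    (fun X => by
      rw [trace_tensorOneE_mul, spectralMatrix_one_kronecker, spectralMatrix_one_kronecker,
        ptrace3E_one_kronecker, hρQ])
    (normSq_overlap_mul_eq_zero hW hp hmarg) (normSq_overlap_mul_eq_zero hW' hp' hmarg')
    (by
      rw [logPotential_overlap_zero hU hW hmarg, logPotential_overlap_zero hU' hW' hmarg',
        ← hS, ← hS', ← hSW, ← hSW']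
      rw [condMutualInfo] at hMarkov
      linarith)
  have hpetz := spectralMatrix_eq_petz (tensorOneE R Q E) tensorOneE_mul
    tensorOneE_conjTranspose hU hU' hp hp' hsqrt
  set S := spectralMatrix W fun i => √(q i) with hSdef
  set T := spectralMatrix W' fun i => (√(q' i))⁻¹ with hTdef
  have hblock : ∀ x y, tensorBlock ρ x y
      = S * ((T * tensorBlock (ptrace3E ρ) x y * T) ⊗ₖ (1 : Matrix E E ℂ)) * S := by
    intro x y
    conv_lhs => rw [hρU, hpetz]
    rw [spectralMatrix_one_kronecker W fun i => √(q i),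
      spectralMatrix_one_kronecker W' fun i => (√(q' i))⁻¹, ← hρU',
      tensorBlock_mul_one_kronecker, tensorBlock_one_kronecker_mul, tensorBlock_tensorOneE,
      tensorBlock_mul_one_kronecker, tensorBlock_one_kronecker_mul]
  -- the Kraus operators of the evolved recovery map, completed off the support of `ρ_Q`
  have hne : Nonempty (R × Q × E) := by
    by_contra hempty
    rw [not_nonempty_iff] at hempty
    simp [trace] at htr
  obtain ⟨-, x₀⟩ := hne.some
  have hne' : Nonempty (Q' × E') := by
    by_contra hempty
    rw [not_nonempty_iff] at hempty
    have := congrFun (congrFun hV x₀) x₀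
    simp [Matrix.mul_apply] at this
  obtain ⟨q₀, -⟩ := hne'.some
  set d : Q → ℝ := fun l => if q' l = 0 then 1 else 0 with hd
  set G := V * S with hG
  set K : (E' × E) ⊕ Q → Matrix Q' Q ℂ := Sum.elim
    (fun k => G.submatrix (fun a => (a, k.1)) (fun b => (b, k.2)) * T)
    (fun l => Matrix.single q₀ l (1 : ℂ) * (diagonal (fun l => (d l : ℂ)) * W'ᴴ)) with hK
  have hSS : S * S = spectralMatrix W q := (spectralMatrix_eq_sqrt_mul_sqrt hW hq).symm
  have hSH : Sᴴ = S := conjTranspose_spectralMatrix _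
  have hTH : Tᴴ = T := conjTranspose_spectralMatrix _
  have hsum : ∑ k, (K k)ᴴ * K k = 1 := by
    rw [Fintype.sum_sum_type]
    simp only [hK, Sum.elim_inl, Sum.elim_inr]
    have h1 : ∑ k : E' × E, (G.submatrix (fun a => (a, k.1)) (fun b => (b, k.2)) * T)ᴴ
        * (G.submatrix (fun a => (a, k.1)) (fun b => (b, k.2)) * T)
        = spectralMatrix W' fun l => 1 - d l := by
      calc _ = T * (∑ k : E' × E, (G.submatrix (fun a => (a, k.1)) (fun b => (b, k.2)))ᴴ
            * G.submatrix (fun a => (a, k.1)) (fun b => (b, k.2))) * T := by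
            simp only [conjTranspose_mul, hTH, Matrix.mul_sum, Matrix.sum_mul, Matrix.mul_assoc]
        _ = T * ptraceRight (S * (Vᴴ * V) * S) * T := by
            rw [← ptraceRight_conjTranspose_mul_self, hG, conjTranspose_mul, hSH]
            simp only [Matrix.mul_assoc]
        _ = _ := by
            rw [hV, Matrix.mul_one, hSS, hρQ, hTdef, spectralMatrix_mul hW',
              spectralMatrix_mul hW']
            congr 1
            funext l
            by_cases hl : q' l = 0
            · simp [hd, hl]
            · have : √(q' l) ≠ 0 := (Real.sqrt_pos.2 (lt_of_le_of_ne (hq' l) (Ne.symm hl))).ne'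
              simp only [hd, if_neg hl, sub_zero]
              nth_rw 2 [← Real.mul_self_sqrt (hq' l)]
              field_simp
    have h2 : ∑ l : Q, (Matrix.single q₀ l (1 : ℂ) * (diagonal (fun l => (d l : ℂ)) * W'ᴴ))ᴴ
        * (Matrix.single q₀ l (1 : ℂ) * (diagonal (fun l => (d l : ℂ)) * W'ᴴ))
        = spectralMatrix W' d := by
      have h3 : ∑ l : Q, (Matrix.single q₀ l (1 : ℂ))ᴴ * Matrix.single q₀ l (1 : ℂ) = 1 := by
        simp only [conjTranspose_single, star_one, single_mul_single_same, mul_one]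
        exact sum_single_one
      have h4 : (diagonal fun l => (d l : ℂ))ᴴ * diagonal (fun l => (d l : ℂ))
          = diagonal fun l => (d l : ℂ) := by
        rw [diagonal_conjTranspose, diagonal_mul_diagonal]
        congr 1
        funext l
        by_cases hl : q' l = 0 <;> simp [hd, hl]
      calc _ = W' * (diagonal fun l => (d l : ℂ))ᴴ * (∑ l : Q, (Matrix.single q₀ l (1 : ℂ))ᴴ
            * Matrix.single q₀ l (1 : ℂ)) * (diagonal (fun l => (d l : ℂ)) * W'ᴴ) := by
            simp only [conjTranspose_mul, conjTranspose_conjTranspose, Matrix.mul_sum,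
              Matrix.sum_mul, Matrix.mul_assoc]
        _ = W' * ((diagonal fun l => (d l : ℂ))ᴴ * diagonal (fun l => (d l : ℂ))) * W'ᴴ := by
            rw [h3, Matrix.mul_one]
            simp only [Matrix.mul_assoc]
        _ = _ := by rw [h4, spectralMatrix]
    rw [h1, h2, spectralMatrix, spectralMatrix, ← Matrix.add_mul, ← Matrix.mul_add,
      diagonal_add]
    simp [mul_eq_one_comm.1 hW']
  have hoff : ∀ x y, diagonal (fun l => (d l : ℂ)) * W'ᴴ * tensorBlock (ptrace3E ρ) x y = 0 := by
    intro x y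
    ext l b
    rw [Matrix.mul_assoc, diagonal_mul, ← tensorBlock_one_kronecker_mul]
    by_cases hl : q' l = 0
    · have h1 : ((1 : Matrix R R ℂ) ⊗ₖ W'ᴴ) * ptrace3E ρ
          = ((U'ᴴ * ((1 : Matrix R R ℂ) ⊗ₖ W'))ᴴ * diagonal fun i => (p' i : ℂ)) * U'ᴴ := by
        rw [hρU', spectralMatrix, conjTranspose_mul, conjTranspose_one_kronecker,
          conjTranspose_conjTranspose]
        simp only [Matrix.mul_assoc]
      rw [h1, tensorBlock, Matrix.of_apply, Matrix.mul_apply, Finset.sum_eq_zero, mul_zero,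
        Matrix.zero_apply]
      intro i _
      rw [mul_diagonal, conjTranspose_apply]
      rcases mul_eq_zero.1 (normSq_overlap_mul_eq_zero hW' hp' hmarg' i (x, l) hl) with h | h
      · rw [Complex.normSq_eq_zero.1 h]
        simp
      · simp [h]
    · simp [hd, hl]
  refine ⟨krausMap K, isCPTP_krausMap K hsum, tensorBlock_ext fun x y => ?_⟩
  rw [tensorBlock_ptrace3E, tensorBlock_idTensor, krausMap_apply, conjTranspose_one_kronecker,
    tensorBlock_mul_one_kronecker, tensorBlock_one_kronecker_mul, hblock, Fintype.sum_sum_type]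
  simp only [hK, Sum.elim_inl, Sum.elim_inr]
  rw [Finset.sum_eq_zero (s := (Finset.univ : Finset Q)) (fun l _ => by
    rw [Matrix.mul_assoc (Matrix.single q₀ l (1 : ℂ)), hoff, Matrix.mul_zero, Matrix.zero_mul]),
    add_zero]
  have hconj : V * (S * ((T * tensorBlock (ptrace3E ρ) x y * T) ⊗ₖ (1 : Matrix E E ℂ)) * S) * Vᴴ
      = G * ((T * tensorBlock (ptrace3E ρ) x y * T) ⊗ₖ (1 : Matrix E E ℂ)) * Gᴴ := by
    rw [hG, conjTranspose_mul, hSH]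
    simp only [Matrix.mul_assoc]
  rw [hconj, ptraceRight_mul_kronecker_one_mul]
  refine Finset.sum_congr rfl fun k _ => ?_
  simp only [conjTranspose_mul, hTH, Matrix.mul_assoc]
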